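/- For functions F, G, H in the Schwartz class on ℝ (one time variable), one has |∫_ℝ F·G·H dt| ≤ C(ε)·‖F‖_{H^{1/2-ε}}·‖G‖_{H^{1/2+ε}}·‖H‖_{H^{-1/2+ε}} for any 0 < ε < 1/2, where H^σ(ℝ) is the Sobolev space with norm ‖F‖_{H^σ} = ‖⟨τ⟩^σ F̂‖_{L²}. -/

import Mathlib

open MeasureTheory FourierTransform

noncomputable def sobNorm1 (σ : ℝ) (F : ℝ → ℂ) : ℝ :=
  (∫ τ : ℝ, Real.sqrt (1 + τ ^ 2) ^ (2 * σ) * ‖𝓕 F τ‖ ^ 2) ^ ((1:ℝ)/2)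

/-! On the Fourier side `∫ F G H` is the integral of `F̂(ξ) Ĝ(η) Ĥ(ζ)` over `ξ + η + ζ = 0`. There
`⟨ζ⟩ ≤ 2 max(⟨ξ⟩, ⟨η⟩)`, so for `0 ≤ s ≤ r` the weight `⟨ζ⟩ ^ s` is at most
`2 ^ s ⟨ξ⟩ ^ s ⟨η⟩ ^ r (⟨ξ⟩ ^ (-r) + ⟨η⟩ ^ (-r))`. The extra factor `⟨ξ⟩ ^ (-r)` or `⟨η⟩ ^ (-r)` is
square integrable when `r` exceeds half the dimension, so multiplying by it moves the weighted
transform of `F` or `G` from `L²` to `L¹`, and the form is bounded on `L¹ × L² × L²`. Negative `s`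
follows by exchanging `F` and `H`. -/

open scoped ENNReal SchwartzMap

section YoungInequality

variable {α : Type*} [MeasurableSpace α]

lemma lintegral_mul_le_eLpNorm_two_mul_eLpNorm_two {μ : Measure α} {f g : α → ℝ≥0∞}
    (hf : Measurable f) (hg : Measurable g) :
    ∫⁻ x, f x * g x ∂μ ≤ eLpNorm f 2 μ * eLpNorm g 2 μ := by
  simpa [eLpNorm_eq_lintegral_rpow_enorm_toReal] using
    ENNReal.lintegral_mul_le_Lp_mul_Lq μ .two_two hf.aemeasurable hg.aemeasurable

variable [AddCommGroup α] [MeasurableNeg α] {μ : Measure α}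
  [μ.IsAddLeftInvariant] [μ.IsNegInvariant] {f g h w : α → ℝ≥0∞}

lemma lintegral_lintegral_mul_neg_add_le [MeasurableAdd α] (hf : Measurable f)
    (hg : Measurable g) (hh : Measurable h) :
    ∫⁻ x, ∫⁻ y, f x * (g y * h (-(x + y))) ∂μ ∂μ
      ≤ (∫⁻ x, f x ∂μ) * (eLpNorm g 2 μ * eLpNorm h 2 μ) := by
  rw [← lintegral_mul_const _ hf]
  refine lintegral_mono fun x ↦ ?_
  have norm_reflect : eLpNorm (fun y ↦ h (-(x + y))) 2 μ = eLpNorm h 2 μ :=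
    eLpNorm_comp_measurePreserving hh.aestronglyMeasurable
      ((Measure.measurePreserving_neg μ).comp (measurePreserving_add_left μ x))
  rw [lintegral_const_mul _ (by fun_prop), ← norm_reflect]
  gcongr
  exact lintegral_mul_le_eLpNorm_two_mul_eLpNorm_two hg (by fun_prop)

lemma lintegral_lintegral_mul_neg_add_mul_add_le [MeasurableAdd₂ α] [SFinite μ]
    (hf : Measurable f) (hg : Measurable g) (hh : Measurable h) (hw : Measurable w) :
    ∫⁻ x, ∫⁻ y, f x * g y * h (-(x + y)) * (w x + w y) ∂μ ∂μ
      ≤ 2 * eLpNorm w 2 μ * (eLpNorm f 2 μ * eLpNorm g 2 μ * eLpNorm h 2 μ) := by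
  have weight_on_left {f g : α → ℝ≥0∞} (hf : Measurable f) (hg : Measurable g) :
      ∫⁻ x, ∫⁻ y, f x * w x * (g y * h (-(x + y))) ∂μ ∂μ
        ≤ eLpNorm f 2 μ * eLpNorm w 2 μ * (eLpNorm g 2 μ * eLpNorm h 2 μ) :=
    (lintegral_lintegral_mul_neg_add_le (hf.mul hw) hg hh).trans <| by
      gcongr
      exact lintegral_mul_le_eLpNorm_two_mul_eLpNorm_two hf hw
  have weight_on_right :
      ∫⁻ x, ∫⁻ y, g y * w y * (f x * h (-(x + y))) ∂μ ∂μ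
        ≤ eLpNorm g 2 μ * eLpNorm w 2 μ * (eLpNorm f 2 μ * eLpNorm h 2 μ) := by
    rw [lintegral_lintegral_swap (by fun_prop)]
    simpa only [add_comm] using weight_on_left hg hf
  calc ∫⁻ x, ∫⁻ y, f x * g y * h (-(x + y)) * (w x + w y) ∂μ ∂μ
      = ∫⁻ x, ∫⁻ y, (f x * w x * (g y * h (-(x + y))) +
          g y * w y * (f x * h (-(x + y)))) ∂μ ∂μ := by
        congr! 4; ring
    _ = (∫⁻ x, ∫⁻ y, f x * w x * (g y * h (-(x + y))) ∂μ ∂μ) +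
          ∫⁻ x, ∫⁻ y, g y * w y * (f x * h (-(x + y))) ∂μ ∂μ := by
        rw [← lintegral_add_left (by fun_prop)]
        congr! 2
        rw [lintegral_add_left (by fun_prop)]
    _ ≤ _ := add_le_add (weight_on_left hf hg) weight_on_right
    _ = _ := by ring

end YoungInequality

lemma add_rpow_le_two_rpow_mul {x y s r : ℝ} (hx : 0 < x) (hy : 0 < y) (hs : 0 ≤ s)
    (hsr : s ≤ r) : (x + y) ^ s ≤ 2 ^ s * (x ^ s * y ^ r * (x ^ (-r) + y ^ (-r))) := by
  have expand : x ^ s * y ^ r * (x ^ (-r) + y ^ (-r)) = x ^ (s - r) * y ^ r + x ^ s := by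
    rw [sub_eq_add_neg, Real.rpow_add hx, Real.rpow_neg hy.le]
    field_simp
  have le_max : (x + y) ^ s ≤ 2 ^ s * max x y ^ s := by
    rw [← Real.mul_rpow two_pos.le (by positivity)]
    gcongr
    linarith [le_max_left x y, le_max_right x y]
  refine le_max.trans ?_
  rw [expand]
  gcongr
  rcases le_total y x with hyx | hxy
  · rw [max_eq_left hyx]
    exact le_add_of_nonneg_left (by positivity)
  · rw [max_eq_right hxy]
    calc y ^ s = y ^ (s - r) * y ^ r := by rw [← Real.rpow_add hy, sub_add_cancel]
      _ ≤ x ^ (s - r) * y ^ r := by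
        gcongr ?_ * _
        exact Real.rpow_le_rpow_of_nonpos hx hxy (by linarith)
      _ ≤ _ := le_add_of_nonneg_right (by positivity)

section JapaneseBracket

variable {V : Type*} [NormedAddCommGroup V]

/-- The Japanese bracket `⟨x⟩ = (1 + ‖x‖²)^{1/2}`, the weight of the Sobolev norms. -/
noncomputable def japaneseBracket (x : V) : ℝ := √(1 + ‖x‖ ^ 2)

lemma japaneseBracket_pos (x : V) : 0 < japaneseBracket x := by
  unfold japaneseBracket
  positivity

lemma japaneseBracket_rpow_pos (x : V) (s : ℝ) : 0 < japaneseBracket x ^ s :=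
  Real.rpow_pos_of_pos (japaneseBracket_pos x) s

lemma japaneseBracket_neg (x : V) : japaneseBracket (-x) = japaneseBracket x := by
  simp [japaneseBracket]

lemma japaneseBracket_rpow (x : V) (s : ℝ) :
    japaneseBracket x ^ s = (1 + ‖x‖ ^ 2) ^ (s / 2) :=
  (Real.rpow_div_two_eq_sqrt s (by positivity)).symm

lemma japaneseBracket_add_le (x y : V) :
    japaneseBracket (x + y) ≤ japaneseBracket x + japaneseBracket y := by
  have norm_le (z : V) : ‖z‖ ≤ japaneseBracket z := Real.le_sqrt_of_sq_le (by linarith)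
  have norm_mul_le : ‖x‖ * ‖y‖ ≤ japaneseBracket x * japaneseBracket y :=
    mul_le_mul (norm_le x) (norm_le y) (norm_nonneg y) (japaneseBracket_pos x).le
  have sq_eq (z : V) : japaneseBracket z ^ 2 = 1 + ‖z‖ ^ 2 := Real.sq_sqrt (by positivity)
  refine Real.sqrt_le_iff.2
    ⟨add_nonneg (japaneseBracket_pos x).le (japaneseBracket_pos y).le, ?_⟩
  calc 1 + ‖x + y‖ ^ 2 ≤ 1 + (‖x‖ + ‖y‖) ^ 2 := by gcongr; exact norm_add_le x y
    _ ≤ (japaneseBracket x + japaneseBracket y) ^ 2 := by nlinarith [sq_eq x, sq_eq y]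

lemma japaneseBracket_add_rpow_le {s r : ℝ} (hs : 0 ≤ s) (hsr : s ≤ r) (x y : V) :
    japaneseBracket (x + y) ^ s ≤ 2 ^ s * (japaneseBracket x ^ s * japaneseBracket y ^ r *
      (japaneseBracket x ^ (-r) + japaneseBracket y ^ (-r))) :=
  (Real.rpow_le_rpow (japaneseBracket_pos _).le (japaneseBracket_add_le x y) hs).trans <|
    add_rpow_le_two_rpow_mul (japaneseBracket_pos x) (japaneseBracket_pos y) hs hsr

lemma measurable_japaneseBracket_rpow [MeasurableSpace V] [OpensMeasurableSpace V] (s : ℝ) :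
    Measurable fun x : V ↦ japaneseBracket x ^ s := by
  unfold japaneseBracket
  fun_prop

variable [InnerProductSpace ℝ V]

@[fun_prop]
lemma hasTemperateGrowth_japaneseBracket_rpow (s : ℝ) :
    (fun x : V ↦ japaneseBracket x ^ s).HasTemperateGrowth := by
  simp only [japaneseBracket_rpow]
  fun_prop

lemma memLp_two_japaneseBracket_rpow_neg [FiniteDimensional ℝ V] [MeasurableSpace V]
    [BorelSpace V] {r : ℝ} (hr : (Module.finrank ℝ V : ℝ) / 2 < r) :
    MemLp (fun x : V ↦ japaneseBracket x ^ (-r)) 2 volume := by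
  rw [memLp_two_iff_integrable_sq (measurable_japaneseBracket_rpow _).aestronglyMeasurable]
  convert! integrable_rpow_neg_one_add_norm_sq (E := V) (μ := volume) (r := 2 * r)
    (by linarith) using 2 with x
  rw [japaneseBracket_rpow, ← Real.rpow_mul_natCast (by positivity)]
  congr 1
  push_cast
  ring

end JapaneseBracket

section FourierSide

variable {V : Type*} [NormedAddCommGroup V] [InnerProductSpace ℝ V] [FiniteDimensional ℝ V]
  [MeasurableSpace V] [BorelSpace V]

lemma fourierInv_mul_eq_integral (G H : 𝓢(V, ℂ)) (ξ : V) :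
    𝓕⁻ (SchwartzMap.pairing (.mul ℂ ℂ) G H) ξ = ∫ η, 𝓕 G η * 𝓕 H (-(ξ + η)) := by
  have fourierInv_apply (f : 𝓢(V, ℂ)) (x : V) : 𝓕⁻ f x = 𝓕 f (-x) := by
    rw [SchwartzMap.fourierInv_coe, SchwartzMap.fourier_coe, Real.fourierInv_eq_fourier_neg]
  calc 𝓕⁻ (SchwartzMap.pairing (.mul ℂ ℂ) G H) ξ
      = SchwartzMap.convolution (.mul ℂ ℂ) (𝓕⁻ G) (𝓕⁻ H) ξ := by
        simp [SchwartzMap.convolution]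
    _ = ∫ η, 𝓕 G (-η) * 𝓕 H (-(ξ - η)) := by
        simp only [SchwartzMap.convolution_apply, convolution_def, fourierInv_apply,
          ContinuousLinearMap.mul_apply']
    _ = ∫ η, 𝓕 G η * 𝓕 H (-(ξ + η)) := by
        rw [← integral_neg_eq_self]
        simp only [neg_neg, sub_neg_eq_add]

lemma integral_mul_mul_eq_integral_fourier (F G H : 𝓢(V, ℂ)) :
    ∫ x, F x * G x * H x = ∫ ξ, 𝓕 F ξ * ∫ η, 𝓕 G η * 𝓕 H (-(ξ + η)) := by
  simp only [← fourierInv_mul_eq_integral]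
  rw [← SchwartzMap.integral_fourierInv_mul_eq]
  simp [mul_assoc]

lemma enorm_integral_mul_mul_le_lintegral_fourier (F G H : 𝓢(V, ℂ)) :
    ‖∫ x, F x * G x * H x‖ₑ ≤ ∫⁻ ξ, ∫⁻ η, ‖𝓕 F ξ * 𝓕 G η * 𝓕 H (-(ξ + η))‖ₑ := by
  simp only [integral_mul_mul_eq_integral_fourier, ← integral_const_mul, ← mul_assoc]
  exact (enorm_integral_le_lintegral_enorm _).trans
    (lintegral_mono fun ξ ↦ enorm_integral_le_lintegral_enorm _)

end FourierSide

section Sobolev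

variable {V : Type*} [NormedAddCommGroup V] [InnerProductSpace ℝ V] [FiniteDimensional ℝ V]
  [MeasurableSpace V] [BorelSpace V]

/-- The function `⟨ξ⟩ ^ s • f̂(ξ)`, whose `L²` norm is the `H^s` norm of `f`. -/
noncomputable def weightedFourier (s : ℝ) (f : V → ℂ) (ξ : V) : ℂ :=
  japaneseBracket ξ ^ s • 𝓕 f ξ

/-- The norm of the inhomogeneous Sobolev space `H^s(V)`. As for every `lpNorm`, its value is `0`
when `weightedFourier s f` is not in `L²`. -/
noncomputable def sobolevNorm (s : ℝ) (f : V → ℂ) : ℝ :=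
  lpNorm (weightedFourier s f) 2 volume

lemma memLp_weightedFourier (s : ℝ) (F : 𝓢(V, ℂ)) :
    MemLp (weightedFourier s F) 2 volume := by
  convert! (SchwartzMap.smulLeftCLM ℂ (fun ξ : V ↦ japaneseBracket ξ ^ s) (𝓕 F)).memLp 2 volume
  ext ξ
  rw [SchwartzMap.smulLeftCLM_apply_apply (by fun_prop)]
  rfl

lemma norm_weightedFourier (s : ℝ) (f : V → ℂ) (ξ : V) :
    ‖weightedFourier s f ξ‖ = japaneseBracket ξ ^ s * ‖𝓕 f ξ‖ := by
  rw [weightedFourier, norm_smul, Real.norm_of_nonneg (japaneseBracket_rpow_pos ξ s).le]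

lemma norm_fourier_mul_mul_le {s r : ℝ} (hs : 0 ≤ s) (hsr : s ≤ r) (F G H : V → ℂ) (ξ η : V) :
    ‖𝓕 F ξ * 𝓕 G η * 𝓕 H (-(ξ + η))‖ ≤
      2 ^ s * (‖weightedFourier s F ξ‖ * ‖weightedFourier r G η‖ *
        ‖weightedFourier (-s) H (-(ξ + η))‖ *
        (japaneseBracket ξ ^ (-r) + japaneseBracket η ^ (-r))) := by
  have weight_cancel :
      japaneseBracket (ξ + η) ^ s * japaneseBracket (ξ + η) ^ (-s) = 1 := by
    rw [← Real.rpow_add (japaneseBracket_pos _), add_neg_cancel, Real.rpow_zero]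
  simp only [norm_weightedFourier, norm_mul, japaneseBracket_neg]
  calc ‖𝓕 F ξ‖ * ‖𝓕 G η‖ * ‖𝓕 H (-(ξ + η))‖
      = japaneseBracket (ξ + η) ^ s * (japaneseBracket (ξ + η) ^ (-s) *
          (‖𝓕 F ξ‖ * ‖𝓕 G η‖ * ‖𝓕 H (-(ξ + η))‖)) := by
        rw [← mul_assoc, weight_cancel, one_mul]
    _ ≤ _ := mul_le_mul_of_nonneg_right (japaneseBracket_add_rpow_le hs hsr ξ η)
        (mul_nonneg (japaneseBracket_rpow_pos _ _).le (by positivity))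
    _ = _ := by ring

lemma enorm_fourier_mul_mul_le {s r : ℝ} (hs : 0 ≤ s) (hsr : s ≤ r) (F G H : V → ℂ) (ξ η : V) :
    ‖𝓕 F ξ * 𝓕 G η * 𝓕 H (-(ξ + η))‖ₑ ≤
      ENNReal.ofReal (2 ^ s) * (‖weightedFourier s F ξ‖ₑ * ‖weightedFourier r G η‖ₑ *
        ‖weightedFourier (-s) H (-(ξ + η))‖ₑ *
        (‖japaneseBracket ξ ^ (-r)‖ₑ + ‖japaneseBracket η ^ (-r)‖ₑ)) := by
  have weight_nonneg (x : V) : 0 ≤ japaneseBracket x ^ (-r) := (japaneseBracket_rpow_pos x _).le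
  refine (ofReal_norm _).symm.trans_le
    ((ENNReal.ofReal_le_ofReal (norm_fourier_mul_mul_le hs hsr F G H ξ η)).trans_eq ?_)
  rw [ENNReal.ofReal_mul (by positivity), ENNReal.ofReal_mul (by positivity),
    ENNReal.ofReal_mul (by positivity), ENNReal.ofReal_mul (by positivity),
    ENNReal.ofReal_add (weight_nonneg ξ) (weight_nonneg η)]
  simp only [ofReal_norm, Real.enorm_of_nonneg, weight_nonneg]

theorem enorm_integral_mul_mul_le {s r : ℝ} (hs : 0 ≤ s) (hsr : s ≤ r) (F G H : 𝓢(V, ℂ)) :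
    ‖∫ x, F x * G x * H x‖ₑ ≤
      ENNReal.ofReal (2 ^ s) *
        (2 * eLpNorm (fun x : V ↦ japaneseBracket x ^ (-r)) 2 volume *
          (eLpNorm (weightedFourier s F) 2 volume * eLpNorm (weightedFourier r G) 2 volume *
            eLpNorm (weightedFourier (-s) H) 2 volume)) := by
  have measurable_weighted (t : ℝ) (f : 𝓢(V, ℂ)) : Measurable (weightedFourier t f) :=
    (measurable_japaneseBracket_rpow t).smul (𝓕 f).continuous.measurable
  refine (enorm_integral_mul_mul_le_lintegral_fourier F G H).trans ?_
  refine (lintegral_mono fun ξ ↦ lintegral_mono fun η ↦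
    enorm_fourier_mul_mul_le hs hsr F G H ξ η).trans ?_
  simp only [lintegral_const_mul' _ _ ENNReal.ofReal_ne_top]
  gcongr
  simpa only [eLpNorm_enorm] using lintegral_lintegral_mul_neg_add_mul_add_le
    (measurable_weighted s F).enorm (measurable_weighted r G).enorm
    (measurable_weighted (-s) H).enorm (measurable_japaneseBracket_rpow (V := V) (-r)).enorm

theorem exists_norm_integral_mul_mul_le_of_nonneg {s r : ℝ} (hs : 0 ≤ s) (hsr : s ≤ r)
    (hr : (Module.finrank ℝ V : ℝ) / 2 < r) :
    ∃ C > 0, ∀ F G H : 𝓢(V, ℂ),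
      ‖∫ x, F x * G x * H x‖ ≤ C * sobolevNorm s F * sobolevNorm r G * sobolevNorm (-s) H := by
  set K : ℝ := 2 ^ s * (2 * lpNorm (fun x : V ↦ japaneseBracket x ^ (-r)) 2 volume) with K_def
  have bound (F G H : 𝓢(V, ℂ)) :
      ‖∫ x, F x * G x * H x‖ ≤
        K * sobolevNorm s F * sobolevNorm r G * sobolevNorm (-s) H := by
    have h := enorm_integral_mul_mul_le hs hsr F G H
    simp only [← ofReal_lpNorm (memLp_two_japaneseBracket_rpow_neg hr),
      ← ofReal_lpNorm (memLp_weightedFourier _ _)] at h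
    simpa [K_def, sobolevNorm, mul_assoc, Real.rpow_nonneg] using
      ENNReal.toReal_mono (by finiteness) h
  refine ⟨max K 1, by positivity, fun F G H ↦ (bound F G H).trans ?_⟩
  have nonneg (t : ℝ) (f : 𝓢(V, ℂ)) : 0 ≤ sobolevNorm t f := lpNorm_nonneg
  gcongr
  exacts [nonneg _ _, nonneg _ _, nonneg _ _, le_max_left K 1]

theorem stmt_8_general {s r : ℝ} (hsr : |s| ≤ r) (hr : (Module.finrank ℝ V : ℝ) / 2 < r) :
    ∃ C > 0, ∀ F G H : 𝓢(V, ℂ),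
      ‖∫ x, F x * G x * H x‖ ≤ C * sobolevNorm s F * sobolevNorm r G * sobolevNorm (-s) H := by
  rcases le_total 0 s with hs | hs
  · exact exists_norm_integral_mul_mul_le_of_nonneg hs ((le_abs_self s).trans hsr) hr
  · obtain ⟨C, C_pos, bound⟩ := exists_norm_integral_mul_mul_le_of_nonneg (V := V)
      (neg_nonneg.2 hs) ((neg_le_abs s).trans hsr) hr
    refine ⟨C, C_pos, fun F G H ↦ ?_⟩
    simpa only [neg_neg, mul_comm, mul_left_comm] using bound H G F

end Sobolev

lemma sobNorm1_eq_sobolevNorm (s : ℝ) (F : 𝓢(ℝ, ℂ)) : sobNorm1 s F = sobolevNorm s F := by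
  rw [sobolevNorm, lpNorm_eq_integral_norm_rpow_toReal two_ne_zero ENNReal.ofNat_ne_top
    (memLp_weightedFourier s F).aestronglyMeasurable, sobNorm1, ENNReal.toReal_ofNat, one_div]
  congr! 3 with τ
  rw [norm_weightedFourier, Real.rpow_two, mul_pow, mul_comm 2 s,
    Real.rpow_mul (Real.sqrt_nonneg _), Real.rpow_two, japaneseBracket, Real.norm_eq_abs, sq_abs]

/-- Temporal trilinear estimate: |∫ FGH| ≲ ‖F‖_{H^{1/2-ε}} ‖G‖_{H^{1/2+ε}} ‖H‖_{H^{-1/2+ε}}. -/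
theorem stmt_8 (ε : ℝ) (hε : 0 < ε) (hε' : ε < 1/2) :
    ∃ C > 0, ∀ F G H : SchwartzMap ℝ ℂ,
      ‖∫ t : ℝ, F t * G t * H t‖
        ≤ C * sobNorm1 (1/2 - ε) F * sobNorm1 (1/2 + ε) G * sobNorm1 (-(1/2) + ε) H := by
  simp only [sobNorm1_eq_sobolevNorm, show -(1 / 2) + ε = -(1 / 2 - ε) by ring]
  exact stmt_8_general (abs_le.2 ⟨by linarith, by linarith⟩) (by simpa)
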